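/- Let θ be an irrational real number satisfying kθ² + lθ + m = 0 for integers k, l, m with k ≥ 2 and gcd(k,l,m) = 1. Then kθ is a quadratic algebraic integer, ℤ + ℤkθ is a unital subring of ℝ, and IM_+(ℤ + ℤθ) equals the group of positive invertible elements of the ring ℤ + ℤkθ, i.e. IM_+(ℤ + ℤθ) = {t ∈ ℝ : t > 0, t ∈ ℤ + ℤkθ, t⁻¹ ∈ ℤ + ℤkθ}. -/

import Mathlib

/-- The positive inner multiplier group of an additive subgroup `E` of `ℝ`:
`IM₊(E) = {t > 0 | t ∈ E, t⁻¹ ∈ E, tE = E}`. -/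
def IMplus (E : AddSubgroup ℝ) : Set ℝ :=
  {t : ℝ | 0 < t ∧ t ∈ E ∧ t⁻¹ ∈ E ∧ (fun x => t * x) '' (E : Set ℝ) = (E : Set ℝ)}

/-- The additive subgroup `ℤ + ℤθ = {a + bθ : a, b ∈ ℤ}` of `ℝ`. -/
def zTheta (θ : ℝ) : AddSubgroup ℝ where
  carrier := {x : ℝ | ∃ a b : ℤ, x = (a : ℝ) + (b : ℝ) * θ}
  zero_mem' := ⟨0, 0, by push_cast; ring⟩
  add_mem' := by
    rintro x y ⟨a, b, rfl⟩ ⟨c, d, rfl⟩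
    exact ⟨a + c, b + d, by push_cast; ring⟩
  neg_mem' := by
    rintro x ⟨a, b, rfl⟩
    exact ⟨-a, -b, by push_cast; ring⟩

/-!
Multiplication by `t > 0` maps a subgroup `E ∋ 1` onto itself exactly when `t` and `t⁻¹` both lie
in the multiplier ring `{s | sE ⊆ E}`. For `E = ℤ + ℤθ`, an element `s = a + bθ` is a multiplier
iff `sθ = c + dθ` for some integers `c`, `d`. Multiplying by `k` and eliminating `kθ²`, the
irrationality of `θ` gives `bl = k(a - d)` and `bm = -kc`. As `gcd(k, l, m) = 1`, this forces
`k ∣ b`, so the multiplier ring is `ℤ + ℤkθ`.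
-/

/-- The multiplier ring `{s | sE ⊆ E}` of an additive subgroup `E` of a ring. Multipliers act on the
left and are not required to lie in `E`. -/
def multiplierRing {R : Type*} [Ring R] (E : AddSubgroup R) : Subring R where
  carrier := {s | ∀ x ∈ E, s * x ∈ E}
  zero_mem' x _ := by simp only [zero_mul, E.zero_mem]
  one_mem' x hx := by rwa [one_mul]
  add_mem' hs ht x hx := by
    rw [add_mul]
    exact E.add_mem (hs x hx) (ht x hx)
  neg_mem' hs x hx := by
    rw [neg_mul]
    exact E.neg_mem (hs x hx)
  mul_mem' hs ht x hx := by
    rw [mul_assoc]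
    exact hs _ (ht x hx)

theorem image_mul_left_eq_iff_mem_multiplierRing {K : Type*} [DivisionRing K] {E : AddSubgroup K}
    {t : K} (ht : t ≠ 0) :
    (fun x => t * x) '' (E : Set K) = E ↔ t ∈ multiplierRing E ∧ t⁻¹ ∈ multiplierRing E := by
  have image_subset : (fun x => t * x) '' (E : Set K) ⊆ E ↔ t ∈ multiplierRing E :=
    Set.image_subset_iff
  have subset_image : (E : Set K) ⊆ (fun x => t * x) '' E ↔ t⁻¹ ∈ multiplierRing E := by
    rw [Set.image_eq_preimage_of_inverse (inv_mul_cancel_left₀ ht) (mul_inv_cancel_left₀ ht)]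
    rfl
  rw [Set.Subset.antisymm_iff, image_subset, subset_image]

theorem mem_of_mem_multiplierRing {R : Type*} [Ring R] {E : AddSubgroup R} (one_mem : 1 ∈ E) {s : R}
    (hs : s ∈ multiplierRing E) : s ∈ E := by
  simpa only [mul_one] using hs 1 one_mem

theorem IMplus_eq_posUnits_multiplierRing {E : AddSubgroup ℝ} (one_mem : 1 ∈ E) :
    IMplus E = {t : ℝ | 0 < t ∧ t ∈ multiplierRing E ∧ t⁻¹ ∈ multiplierRing E} := by
  ext t
  constructor
  · rintro ⟨ht, -, -, himage⟩
    exact ⟨ht, (image_mul_left_eq_iff_mem_multiplierRing ht.ne').mp himage⟩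
  · rintro ⟨ht, hmul, hinv⟩
    exact ⟨ht, mem_of_mem_multiplierRing one_mem hmul, mem_of_mem_multiplierRing one_mem hinv,
      (image_mul_left_eq_iff_mem_multiplierRing ht.ne').mpr ⟨hmul, hinv⟩⟩

theorem one_mem_zTheta (θ : ℝ) : 1 ∈ zTheta θ :=
  ⟨1, 0, by simp⟩

theorem self_mem_zTheta (θ : ℝ) : θ ∈ zTheta θ :=
  ⟨0, 1, by simp⟩

theorem intCast_add_intCast_mul_eq_zero_iff {θ : ℝ} (hirr : Irrational θ) {a b : ℤ} :
    (a : ℝ) + b * θ = 0 ↔ a = 0 ∧ b = 0 := by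
  refine ⟨fun h => ?_, fun ⟨ha, hb⟩ => by simp [ha, hb]⟩
  have hb : b = 0 := by
    by_contra hb
    exact ((hirr.intCast_mul hb).intCast_add a).ne_zero h
  refine ⟨?_, hb⟩
  simpa [hb] using h

theorem dvd_of_dvd_mul_of_isUnit_gcd {α : Type*} [CommMonoidWithZero α] [GCDMonoid α] {k l m b : α}
    (hgcd : IsUnit (gcd (gcd k l) m)) (hl : k ∣ b * l) (hm : k ∣ b * m) : k ∣ b := by
  have hkl : k ∣ b * gcd k l := dvd_mul_gcd_of_dvd_mul hl
  have hklm : k ∣ b * gcd (gcd k l) m := (dvd_gcd hkl hm).trans (gcd_mul_left' b _ m).dvd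
  exact hgcd.dvd_mul_right.mp hklm

section Quadratic

variable {θ : ℝ} {k l m : ℤ}

theorem zTheta_le_multiplierRing_zTheta (hquad : (k : ℝ) * θ ^ 2 + l * θ + m = 0) :
    zTheta (k * θ) ≤ (multiplierRing (zTheta θ)).toAddSubgroup := by
  rintro _ ⟨a, b, rfl⟩ _ ⟨c, d, rfl⟩
  refine ⟨a * c - b * d * m, a * d + b * c * k - b * d * l, ?_⟩
  push_cast
  linear_combination (b : ℝ) * d * hquad

theorem multiplierRing_zTheta_le_zTheta (hirr : Irrational θ)
    (hgcd : Int.gcd (Int.gcd k l) m = 1) (hquad : (k : ℝ) * θ ^ 2 + l * θ + m = 0) :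
    (multiplierRing (zTheta θ)).toAddSubgroup ≤ zTheta (k * θ) := by
  intro s hs
  obtain ⟨a, b, rfl⟩ := mem_of_mem_multiplierRing (one_mem_zTheta θ) hs
  obtain ⟨c, d, hcd⟩ := hs θ (self_mem_zTheta θ)
  obtain ⟨hconst, hlin⟩ : k * c + b * m = 0 ∧ k * d + b * l - k * a = 0 := by
    rw [← intCast_add_intCast_mul_eq_zero_iff hirr]
    push_cast
    linear_combination (b : ℝ) * hquad - (k : ℝ) * hcd
  have hl : k ∣ b * l := ⟨a - d, by linear_combination hlin⟩
  have hm : k ∣ b * m := ⟨-c, by linear_combination hconst⟩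
  have hunit : IsUnit (gcd (gcd k l) m) := by
    rw [← Int.coe_gcd, ← Int.coe_gcd, hgcd]
    exact isUnit_one
  obtain ⟨e, rfl⟩ := dvd_of_dvd_mul_of_isUnit_gcd hunit hl hm
  exact ⟨a, e, by push_cast; ring⟩

theorem multiplierRing_zTheta (hirr : Irrational θ) (hgcd : Int.gcd (Int.gcd k l) m = 1)
    (hquad : (k : ℝ) * θ ^ 2 + l * θ + m = 0) :
    (multiplierRing (zTheta θ)).toAddSubgroup = zTheta (k * θ) :=
  le_antisymm (multiplierRing_zTheta_le_zTheta hirr hgcd hquad)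
    (zTheta_le_multiplierRing_zTheta hquad)

end Quadratic

theorem IMplus_zTheta_eq_posUnits_zktheta_general
    (θ : ℝ) (hirr : Irrational θ) (k l m : ℤ)
    (hgcd : Int.gcd (Int.gcd k l) m = 1)
    (hquad : (k : ℝ) * θ ^ 2 + (l : ℝ) * θ + (m : ℝ) = 0) :
    (∃ l' m' : ℤ, ((k : ℝ) * θ) ^ 2 + (l' : ℝ) * ((k : ℝ) * θ) + (m' : ℝ) = 0) ∧
    ((1 : ℝ) ∈ zTheta ((k : ℝ) * θ) ∧
      ∀ x ∈ zTheta ((k : ℝ) * θ), ∀ y ∈ zTheta ((k : ℝ) * θ),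
        x * y ∈ zTheta ((k : ℝ) * θ)) ∧
    IMplus (zTheta θ) =
      {t : ℝ | 0 < t ∧ t ∈ zTheta ((k : ℝ) * θ) ∧ t⁻¹ ∈ zTheta ((k : ℝ) * θ)} := by
  have hring := multiplierRing_zTheta hirr hgcd hquad
  refine ⟨⟨l, k * m, ?_⟩, ⟨one_mem_zTheta _, ?_⟩, ?_⟩
  · push_cast
    linear_combination (k : ℝ) * hquad
  · rw [← hring]
    exact fun x hx y hy => (multiplierRing (zTheta θ)).mul_mem hx hy
  · rw [← hring]
    exact IMplus_eq_posUnits_multiplierRing (one_mem_zTheta θ)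

/-- if `θ` is irrational with `kθ² + lθ + m = 0`, `k ≥ 2`,
`gcd(k,l,m) = 1`, then `kθ` is a quadratic algebraic integer, `ℤ + ℤkθ` is a unital
subring of `ℝ`, and `IM₊(ℤ + ℤθ)` equals the group of positive invertible elements of
the ring `ℤ + ℤkθ`. -/
theorem IMplus_zTheta_eq_posUnits_zktheta
    (θ : ℝ) (hirr : Irrational θ) (k l m : ℤ) (hk : 2 ≤ k)
    (hgcd : Int.gcd (Int.gcd k l) m = 1)
    (hquad : (k : ℝ) * θ ^ 2 + (l : ℝ) * θ + (m : ℝ) = 0) :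
    (∃ l' m' : ℤ, ((k : ℝ) * θ) ^ 2 + (l' : ℝ) * ((k : ℝ) * θ) + (m' : ℝ) = 0) ∧
    ((1 : ℝ) ∈ zTheta ((k : ℝ) * θ) ∧
      ∀ x ∈ zTheta ((k : ℝ) * θ), ∀ y ∈ zTheta ((k : ℝ) * θ),
        x * y ∈ zTheta ((k : ℝ) * θ)) ∧
    IMplus (zTheta θ) =
      {t : ℝ | 0 < t ∧ t ∈ zTheta ((k : ℝ) * θ) ∧ t⁻¹ ∈ zTheta ((k : ℝ) * θ)} :=
  IMplus_zTheta_eq_posUnits_zktheta_general θ hirr k l m hgcd hquad
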